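/- There exists a constant C > 0 such that, uniformly for all real x, y with 2 ≤ y ≤ log x, one has f(x,y) ≤ Ψ(x,y) and f(x,y) ≥ (Ψ(x,y)/(1 + y/log x)) · (1 − C(log y/y + y/(log x · log y))). -/

import Mathlib

/-- `Pmax n` is the largest prime factor of `n`, with the convention `Pmax 1 = 1`. -/
def Pmax (n : ℕ) : ℕ := if n ≤ 1 then 1 else n.primeFactors.sup id

/-- The Schinzel–Szekeres function: if `n = p₁ p₂ ⋯ p_Ω` with `p₁ ≥ p₂ ≥ ⋯ ≥ p_Ω` prime,
`SS n = max_{1 ≤ k ≤ Ω} p₁ ⋯ p_{k-1} p_k²`, and `SS 1 = 1`.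
(`Nat.primeFactorsList n` is the *increasing* list of prime factors with multiplicity;
the value produced for the index `j` is the one for `k = Ω - j`.) -/
def SS (n : ℕ) : ℕ :=
  ((List.range n.primeFactorsList.length).map
    (fun j => (n.primeFactorsList.drop j).headI * (n.primeFactorsList.drop j).prod)).foldr max 1

/-- A chain in the divisor graph: a finite sequence of pairwise distinct positive
integers in which any two consecutive terms are adjacent in the divisor graph
(the smaller divides the larger). -/
def IsDivChain (l : List ℕ) : Prop :=
  l.Nodup ∧ (∀ n ∈ l, 0 < n) ∧ l.Chain' (fun a b => a ∣ b ∨ b ∣ a)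

/-- `fxy x y` is the maximum length of a chain all of whose terms `n`
satisfy `n ≤ x` and `P(n) ≤ y`. -/
noncomputable def fxy (x y : ℝ) : ℕ :=
  sSup {L : ℕ | ∃ l : List ℕ, IsDivChain l ∧
    (∀ n ∈ l, (n : ℝ) ≤ x ∧ (Pmax n : ℝ) ≤ y) ∧ l.length = L}

/-- `Psi x y = #{1 ≤ n ≤ x : P(n) ≤ y}`. -/
noncomputable def Psi (x y : ℝ) : ℕ :=
  {n : ℕ | 1 ≤ n ∧ (n : ℝ) ≤ x ∧ (Pmax n : ℝ) ≤ y}.ncard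


theorem dc_append {l₁ l₂ : List ℕ} (h₁ : IsDivChain l₁) (h₂ : IsDivChain l₂)
    (hd : ∀ n ∈ l₁, n ∉ l₂) (a b : ℕ) (ha : l₁.getLast? = some a) (hb : l₂.head? = some b)
    (hab : a ∣ b ∨ b ∣ a) : IsDivChain (l₁ ++ l₂) := by
  obtain ⟨n1, p1, c1⟩ := h₁
  obtain ⟨n2, p2, c2⟩ := h₂
  refine ⟨?_, ?_, ?_⟩
  · rw [List.nodup_append]
    refine ⟨n1, n2, ?_⟩
    rintro x hx z hz rfl
    exact hd _ hx hz
  · intro n hn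
    rcases List.mem_append.1 hn with h | h
    · exact p1 n h
    · exact p2 n h
  · refine List.IsChain.append c1 c2 ?_
    intro x hx z hz
    rw [ha] at hx
    rw [hb] at hz
    cases hx
    cases hz
    exact hab

theorem dc_reverse {l : List ℕ} (h : IsDivChain l) : IsDivChain l.reverse := by
  obtain ⟨n1, p1, c1⟩ := h
  refine ⟨List.nodup_reverse.2 n1, fun n hn => p1 n (List.mem_reverse.1 hn), ?_⟩
  refine List.isChain_reverse.2 ?_
  refine List.IsChain.imp ?_ c1
  intro a b hab
  exact hab.symm

theorem dc_map {l : List ℕ} (h : IsDivChain l) (c : ℕ) (hc : 0 < c) :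
    IsDivChain (l.map (c * ·)) := by
  obtain ⟨n1, p1, c1⟩ := h
  refine ⟨n1.map (fun a b hab => Nat.eq_of_mul_eq_mul_left hc hab), ?_, ?_⟩
  · intro n hn
    obtain ⟨m, hm, rfl⟩ := List.mem_map.1 hn
    exact Nat.mul_pos hc (p1 m hm)
  · refine (List.isChain_map _).2 ?_
    refine List.IsChain.imp ?_ c1
    rintro a b (hab | hab)
    · exact Or.inl (Nat.mul_dvd_mul_left _ hab)
    · exact Or.inr (Nat.mul_dvd_mul_left _ hab)

/-- the covering condition -/
def Cond (j X n : ℕ) : Prop :=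
  ∀ i < j, ∃ d e, n = d * e ∧ (∀ q, q.Prime → q ∣ d → q ≤ Nat.nth Nat.Prime i) ∧
    e * Nat.nth Nat.Prime (i+1) * Nat.nth Nat.Prime i ≤ X

/-- the path statement -/
def PathSt (j X : ℕ) (l : List ℕ) : Prop :=
  IsDivChain l ∧ l.head? = some 1 ∧ l.getLast? = some (Nat.nth Nat.Prime j) ∧
  (∀ n ∈ l, n ≤ X ∧ ∀ q, q.Prime → q ∣ n → q ≤ Nat.nth Nat.Prime j) ∧
  (∀ n, 0 < n → n ≤ X → (∀ q, q.Prime → q ∣ n → q ≤ Nat.nth Nat.Prime j) → Cond j X n → n ∈ l)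

theorem path_base (X : ℕ) (hX : 2 ≤ X) : ∃ l, PathSt 0 X l := by
  have h0 : Nat.nth Nat.Prime 0 = 2 := Nat.nth_prime_zero_eq_two
  set h := Nat.log 2 X with hh
  have h1 : 1 ≤ h := Nat.log_pos (by norm_num) hX
  let E : List ℕ := 0 :: ((List.range (h-1)).map (· + 2) ++ [1])
  have hE : E.Nodup := by
    simp only [E, List.nodup_cons, List.nodup_append]
    refine ⟨by simp, ?_, by simp, by simp⟩
    exact (List.nodup_range).map (fun a b hab => by simpa using hab)
  have hEm : ∀ a, a ∈ E ↔ a ≤ h := by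
    intro a
    simp only [E, List.mem_cons, List.mem_append, List.mem_map, List.mem_range]
    constructor
    · rintro (h | ⟨b, hb, rfl⟩ | h | h)
      · omega
      · omega
      · omega
      · simp at h
    · intro ha
      rcases Nat.lt_or_ge a 2 with h | h
      · have : a = 0 ∨ a = 1 := by omega
        rcases this with h | h <;> simp [h]
      · right; left; exact ⟨a-2, by omega, by omega⟩
  have hpow : ∀ a, a ≤ h → 2^a ≤ X := fun a ha =>
    (Nat.pow_le_pow_right (by norm_num) ha).trans (Nat.pow_log_le_self 2 (by omega))
  refine ⟨E.map (2 ^ ·), ⟨?_, ?_, ?_⟩, ?_, ?_, ?_, ?_⟩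
  · exact hE.map (Nat.pow_right_injective (le_refl 2))
  · intro n hn
    obtain ⟨m, hm, rfl⟩ := List.mem_map.1 hn
    positivity
  · refine (List.isChain_map _).2 ?_
    refine List.IsChain.imp (R := fun _ _ => True) ?_ ?_
    · intro a b _
      rcases Nat.le_total a b with h | h
      · exact Or.inl (pow_dvd_pow 2 h)
      · exact Or.inr (pow_dvd_pow 2 h)
    · exact List.Pairwise.isChain (List.pairwise_of_forall (fun _ _ => trivial))
  · simp [E]
  · rw [h0]
    have : E = (0 :: (List.range (h-1)).map (· + 2)) ++ [1] := by simp [E]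
    rw [this, List.map_append, List.getLast?_append]
    simp
  · intro n hn
    obtain ⟨m, hm, rfl⟩ := List.mem_map.1 hn
    refine ⟨hpow m ((hEm m).1 hm), ?_⟩
    intro q hq hqd
    rw [h0]
    exact Nat.le_of_dvd (by norm_num) (hq.dvd_of_dvd_pow hqd)
  · intro n hn hnX hq _
    rw [h0] at hq
    have : ∃ a, n = 2^a := by
      refine ⟨_, Nat.eq_prime_pow_of_unique_prime_dvd hn.ne' ?_⟩
      intro d hd hdn
      exact le_antisymm (hq d hd hdn) hd.two_le
    obtain ⟨a, rfl⟩ := this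
    refine List.mem_map.2 ⟨a, (hEm a).2 ?_, rfl⟩
    exact Nat.le_log_of_pow_le (by norm_num) hnX

theorem path_step_aux (P q : ℕ) (Lv : ℕ → List ℕ) (M : ℕ)
    (hc : ∀ a ≤ M, IsDivChain (Lv a))
    (hh : ∀ a ≤ M, (Lv a).head? = some (P^a))
    (hl : ∀ a ≤ M, (Lv a).getLast? = some (P^a*q))
    (hd : ∀ a ≤ M, ∀ b ≤ M, a ≠ b → ∀ n ∈ Lv a, n ∉ Lv b) (s : ℕ) (hs : 2*s ≤ M ) (hs' : 2*s+1 ≤ M):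
    ∃ l c, IsDivChain l ∧ l.head? = some 1 ∧ l.getLast? = some (P^c*q) ∧
      ∀ n, n ∈ l ↔ ∃ a ≤ 2*s+1, a ≠ 1 ∧ n ∈ Lv a := by
  have cmp : ∀ a b r : ℕ, P^a*r ∣ P^b*r ∨ P^b*r ∣ P^a*r := by
    intro a b r
    rcases Nat.le_total a b with h | h
    · exact Or.inl (Nat.mul_dvd_mul_right (pow_dvd_pow P h) r)
    · exact Or.inr (Nat.mul_dvd_mul_right (pow_dvd_pow P h) r)
  induction s with
  | zero =>
    refine ⟨Lv 0, 0, hc 0 (by omega), by simpa using hh 0 (by omega), hl 0 (by omega), ?_⟩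
    intro n
    constructor
    · intro h; exact ⟨0, by omega, by omega, h⟩
    · rintro ⟨a, ha, ha1, h⟩
      have : a = 0 := by omega
      rwa [this] at h
  | succ s ih =>
    obtain ⟨l, c, h1, h2, h3, h4⟩ := ih (by omega) (by omega)
    have hm1 : 2*s+2 ≤ M := by omega
    have hm2 : 2*s+3 ≤ M := by omega
    have hb : IsDivChain ((Lv (2*s+2)).reverse ++ Lv (2*s+3)) := by
      refine dc_append (dc_reverse (hc _ hm1)) (hc _ hm2) ?_ (P^(2*s+2)) (P^(2*s+3)) ?_ (hh _ hm2) ?_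
      · intro n hn
        exact hd _ hm1 _ hm2 (by omega) n (List.mem_reverse.1 hn)
      · rw [List.getLast?_reverse]; exact hh _ hm1
      · simpa using cmp (2*s+2) (2*s+3) 1
    have hne : ∀ a ≤ M, Lv a ≠ [] := by
      intro a ha h
      have := hh a ha
      rw [h] at this
      simp at this
    refine ⟨l ++ ((Lv (2*s+2)).reverse ++ Lv (2*s+3)), 2*s+3, ?_, ?_, ?_, ?_⟩
    · refine dc_append h1 hb ?_ (P^c*q) (P^(2*s+2)*q) h3 ?_ (cmp _ _ _)
      · intro n hn hn2
        obtain ⟨a, ha, ha1, hna⟩ := (h4 n).1 hn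
        rcases List.mem_append.1 hn2 with h | h
        · exact hd a (by omega) _ hm1 (by omega) n hna (List.mem_reverse.1 h)
        · exact hd a (by omega) _ hm2 (by omega) n hna h
      · rw [List.head?_append, List.head?_reverse, hl _ hm1]; rfl
    · rw [List.head?_append, h2]; rfl
    · rw [List.getLast?_append, List.getLast?_append, hl _ hm2]; rfl
    · intro n
      rw [List.mem_append, List.mem_append, List.mem_reverse, h4]
      constructor
      · rintro (⟨a, ha, ha1, h⟩ | h | h)
        · exact ⟨a, by omega, ha1, h⟩
        · exact ⟨_, by omega, by omega, h⟩
        · exact ⟨_, by omega, by omega, h⟩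
      · rintro ⟨a, ha, ha1, h⟩
        rcases Nat.lt_or_ge a (2*s+2) with h' | h'
        · exact Or.inl ⟨a, by omega, ha1, h⟩
        · have : a = 2*s+2 ∨ a = 2*s+3 := by omega
          rcases this with rfl | rfl
          · exact Or.inr (Or.inl h)
          · exact Or.inr (Or.inr h)

theorem path_step (j : ℕ) (ih : ∀ X, Nat.nth Nat.Prime j ≤ X → ∃ l, PathSt j X l)
    (X : ℕ) (hX : Nat.nth Nat.Prime (j+1) ≤ X) : ∃ l, PathSt (j+1) X l := by
  set P := Nat.nth Nat.Prime (j+1) with hPdef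
  set q := Nat.nth Nat.Prime j with hqdef
  have hPp : P.Prime := Nat.prime_nth_prime _
  have hqp : q.Prime := Nat.prime_nth_prime _
  have hqP : q < P := Nat.nth_strictMono Nat.infinite_setOfPred_prime (Nat.lt_succ_self j)
  have hle : ∀ r, r.Prime → r ≤ P → r = P ∨ r ≤ q := by
    intro r hr hrP
    by_contra! hcon
    have h1 : r < P := lt_of_le_of_ne hrP hcon.1
    rw [hPdef, ← Nat.nth_count hr, ] at h1
    have h3 := hcon.2
    rw [hqdef, ← Nat.nth_count hr] at h3
    have := (Nat.nth_lt_nth Nat.infinite_setOfPred_prime).1 h1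
    have := (Nat.nth_lt_nth Nat.infinite_setOfPred_prime).1 h3
    omega
  by_cases hsm : X < P * q
  · refine ⟨[1, P], ⟨?_, ?_, ?_⟩, rfl, rfl, ?_, ?_⟩
    · simp [hPp.one_lt.ne]
    · intro n hn
      simp at hn
      rcases hn with rfl | rfl
      · norm_num
      · exact hPp.pos
    · show List.IsChain _ _
      simp
    · intro n hn
      simp at hn
      rcases hn with rfl | rfl
      · refine ⟨hPp.pos.trans_le hX, ?_⟩
        intro r hr hr1
        exact absurd (Nat.dvd_one.1 hr1) hr.one_lt.ne'
      · exact ⟨hX, fun r hr hrd => Nat.le_of_dvd hPp.pos hrd⟩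
    · intro n hn _ _ hcond
      obtain ⟨d, e, rfl, _, he⟩ := hcond j (Nat.lt_succ_self j)
      have he0 : 0 < e := Nat.pos_of_mul_pos_left hn
      exfalso
      have : 1 * P * q ≤ e * P * q := by gcongr; omega
      have h2 : e * P * q ≤ X := he
      rw [one_mul] at this
      omega
  push Not at hsm
  set h := Nat.log P (X / q) with hh
  have hXq : P ≤ X / q := (Nat.le_div_iff_mul_le hqp.pos).2 hsm
  have hh1 : 1 ≤ h := Nat.log_pos hPp.one_lt hXq
  set s := (h-1)/2 with hs
  set M := 2*s+1 with hM
  have hMh : M ≤ h := by omega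
  have hhM : h ≤ M + 1 := by omega
  have hlev : ∀ a ≤ M, P^a * q ≤ X := by
    intro a ha
    have : P^a ≤ X/q := (Nat.pow_le_pow_right hPp.pos (ha.trans hMh)).trans
      (Nat.pow_log_le_self P (by have := hPp.pos; omega))
    exact (Nat.le_div_iff_mul_le hqp.pos).1 this
  have hex : ∀ a, ∃ l, a ≤ M → PathSt j (X / P^a) l := by
    intro a
    by_cases ha : a ≤ M
    · obtain ⟨l, hl⟩ := ih (X / P^a) ((Nat.le_div_iff_mul_le (pow_pos hPp.pos a)).2
        (by rw [mul_comm]; exact hlev a ha))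
      exact ⟨l, fun _ => hl⟩
    · exact ⟨[], fun h => absurd h ha⟩
  choose K hK using hex
  let Lv : ℕ → List ℕ := fun a => (K a).map (P^a * ·)
  have hmem : ∀ a ≤ M, ∀ n ∈ Lv a, ∃ m, n = P^a*m ∧ ¬ P ∣ m ∧ m ∈ K a := by
    intro a ha n hn
    obtain ⟨m, hm, rfl⟩ := List.mem_map.1 hn
    refine ⟨m, rfl, ?_, hm⟩
    intro hPm
    have := ((hK a ha).2.2.2.1 m hm).2 P hPp hPm
    omega
  have hLc : ∀ a ≤ M, IsDivChain (Lv a) := fun a ha => dc_map (hK a ha).1 _ (pow_pos hPp.pos a)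
  have hLh : ∀ a ≤ M, (Lv a).head? = some (P^a) := by
    intro a ha
    simp [Lv, List.head?_map, (hK a ha).2.1]
  have hLl : ∀ a ≤ M, (Lv a).getLast? = some (P^a*q) := by
    intro a ha
    simp [Lv, List.getLast?_map, (hK a ha).2.2.1, hqdef]
  have hLd : ∀ a ≤ M, ∀ b ≤ M, a ≠ b → ∀ n ∈ Lv a, n ∉ Lv b := by
    intro a ha b hb hab n hna hnb
    obtain ⟨m, rfl, hm, _⟩ := hmem a ha n hna
    obtain ⟨m', hmm, hm', _⟩ := hmem b hb _ hnb
    rcases Nat.lt_or_gt_of_ne hab with h | h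
    · obtain ⟨c, rfl⟩ := Nat.exists_eq_add_of_lt h
      rw [show a + c + 1 = a + (c+1) by ring, pow_add, mul_assoc] at hmm
      have := Nat.eq_of_mul_eq_mul_left (pow_pos hPp.pos a) hmm
      exact hm (this ▸ ((dvd_pow_self P (by omega)).mul_right m'))
    · obtain ⟨c, rfl⟩ := Nat.exists_eq_add_of_lt h
      rw [show b + c + 1 = b + (c+1) by ring, pow_add, mul_assoc] at hmm
      have := Nat.eq_of_mul_eq_mul_left (pow_pos hPp.pos b) hmm
      exact hm' (this ▸ ((dvd_pow_self P (by omega)).mul_right m))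
  obtain ⟨l, c, h1, h2, h3, h4⟩ := path_step_aux P q Lv M hLc hLh hLl hLd s (by omega) (by omega)
  have hM1 : 1 ≤ M := by omega
  have hmemAll : ∀ n, n ∈ l ++ (Lv 1).reverse ↔ ∃ a ≤ M, n ∈ Lv a := by
    intro n
    rw [List.mem_append, List.mem_reverse, h4]
    constructor
    · rintro (⟨a, ha, _, h⟩ | h)
      · exact ⟨a, ha, h⟩
      · exact ⟨1, hM1, h⟩
    · rintro ⟨a, ha, h⟩
      by_cases ha1 : a = 1
      · rw [ha1] at h; exact Or.inr h
      · exact Or.inl ⟨a, ha, ha1, h⟩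
  refine ⟨l ++ (Lv 1).reverse, ?_, ?_, ?_, ?_, ?_⟩
  · refine dc_append h1 (dc_reverse (hLc 1 hM1)) ?_ (P^c*q) (P^1*q) h3 ?_ ?_
    · intro n hn hn2
      obtain ⟨a, ha, ha1, hna⟩ := (h4 n).1 hn
      exact hLd a ha 1 hM1 ha1 n hna (List.mem_reverse.1 hn2)
    · rw [List.head?_reverse, hLl 1 hM1]
    · rcases Nat.le_total c 1 with h | h
      · exact Or.inl (Nat.mul_dvd_mul_right (pow_dvd_pow P h) q)
      · exact Or.inr (Nat.mul_dvd_mul_right (pow_dvd_pow P h) q)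
  · rw [List.head?_append, h2]; rfl
  · rw [List.getLast?_append, List.getLast?_reverse, hLh 1 hM1]
    simp [hPdef]
  · intro n hn
    obtain ⟨a, ha, hna⟩ := (hmemAll n).1 hn
    obtain ⟨m, rfl, _, hm⟩ := hmem a ha n hna
    obtain ⟨hmX, hmq⟩ := (hK a ha).2.2.2.1 m hm
    refine ⟨?_, ?_⟩
    · rw [mul_comm]; exact (Nat.le_div_iff_mul_le (pow_pos hPp.pos a)).1 hmX
    · intro r hr hrd
      rcases (Nat.Prime.dvd_mul hr).1 hrd with h | h
      · exact Nat.le_of_dvd hPp.pos (hr.dvd_of_dvd_pow h)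
      · exact (hmq r hr h).trans hqP.le
  · intro n hn hnX hnq hcond
    obtain ⟨a, m, hPm, rfl⟩ := Nat.exists_eq_pow_mul_and_not_dvd hn.ne' P hPp.one_lt.ne'
    have key : ∀ d e, P^a*m = d*e → (∀ r, r.Prime → r ∣ d → r ≤ q) → ∃ e', m = d*e' ∧ e = P^a*e' := by
      intro d e hde hd
      have hcop : Nat.Coprime (P^a) d := by
        refine Nat.Coprime.pow_left a ((Nat.Prime.coprime_iff_not_dvd hPp).2 ?_)
        intro h
        have := hd P hPp h
        omega
      have : P^a ∣ e := hcop.dvd_of_dvd_mul_left (hde ▸ Dvd.intro _ rfl)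
      obtain ⟨e', rfl⟩ := this
      refine ⟨e', ?_, rfl⟩
      apply Nat.eq_of_mul_eq_mul_left (pow_pos hPp.pos a)
      rw [hde]; ring
    have haM : a ≤ M := by
      obtain ⟨d, e, hde, hd, he⟩ := hcond j (Nat.lt_succ_self j)
      obtain ⟨e', hm, rfl⟩ := key d e hde hd
      have he0 : 0 < e' := by
        rcases Nat.eq_zero_or_pos e' with h | h
        · subst h; simp [hm] at hn
        · exact h
      have h5 : P^(a+1) * q ≤ X := by
        refine le_trans ?_ he
        rw [pow_succ]
        have : P^a * 1 * P * q ≤ P^a*e'*P*q := by gcongr; omega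
        simpa using this
      have h6 : P^(a+1) ≤ X/q := (Nat.le_div_iff_mul_le hqp.pos).2 h5
      have := Nat.le_log_of_pow_le hPp.one_lt h6
      omega
    refine (hmemAll _).2 ⟨a, haM, List.mem_map.2 ⟨m, ?_, rfl⟩⟩
    refine (hK a haM).2.2.2.2 m (Nat.pos_of_mul_pos_left hn) ?_ ?_ ?_
    · exact (Nat.le_div_iff_mul_le (pow_pos hPp.pos a)).2 (by rw [mul_comm]; exact hnX)
    · intro r hr hrm
      rcases hle r hr (hnq r hr (hrm.mul_left _)) with h | h
      · exact absurd (h ▸ hrm) hPm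
      · exact h
    · intro i hi
      obtain ⟨d, e, hde, hd, he⟩ := hcond i (by omega)
      have hiq : Nat.nth Nat.Prime i ≤ q := Nat.nth_monotone Nat.infinite_setOfPred_prime (by omega)
      obtain ⟨e', hm, rfl⟩ := key d e hde (fun r hr hrd => (hd r hr hrd).trans hiq)
      refine ⟨d, e', hm, hd, ?_⟩
      rw [Nat.le_div_iff_mul_le (pow_pos hPp.pos a)]
      refine le_trans (le_of_eq ?_) he
      ring

theorem path_exists (j : ℕ) : ∀ X, Nat.nth Nat.Prime j ≤ X → ∃ l, PathSt j X l := by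
  induction j with
  | zero => intro X hX; exact path_base X (by rwa [Nat.nth_prime_zero_eq_two] at hX)
  | succ j ih => exact path_step j ih

/-- numbers up to `X` with prime factors in `P` -/
def Sm (P : Finset ℕ) (X : ℕ) : Finset ℕ := (Finset.Icc 1 X).filter (fun n => n.primeFactors ⊆ P)

theorem mem_Sm {P : Finset ℕ} {X n : ℕ} : n ∈ Sm P X ↔ (1 ≤ n ∧ n ≤ X) ∧ n.primeFactors ⊆ P := by
  simp [Sm]

theorem fact_q_zero {P : Finset ℕ} {X n q : ℕ} (hn : n ∈ Sm (P.erase q) X) : n.factorization q = 0 := by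
  rw [mem_Sm] at hn
  by_contra h
  have : q ∈ n.primeFactors := by
    rw [← Nat.support_factorization]; exact Finsupp.mem_support_iff.2 h
  have := hn.2 this
  simp at this

theorem swap_count (P : Finset ℕ) (X q p : ℕ) (hq : q.Prime) (hqP : q ∈ P) (hp : p.Prime) :
    ∑ n ∈ Sm (P.erase q) X, (Nat.log q (p ^ n.factorization p) + 1) ≤ (Sm P X).card := by
  have : ∑ n ∈ Sm (P.erase q) X, (Nat.log q (p ^ n.factorization p) + 1) =
      ((Sm (P.erase q) X).sigma (fun n => Finset.range (Nat.log q (p ^ n.factorization p) + 1))).card := by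
    rw [Finset.card_sigma]; simp
  rw [this]
  have aux : ∀ n i, n ∈ Sm (P.erase q) X → i ≤ Nat.log q (p ^ n.factorization p) →
      p ^ (Nat.clog p (q^i)) ∣ n := by
    intro n i hn hi
    refine (pow_dvd_pow p ?_).trans (Nat.ordProj_dvd n p)
    refine Nat.clog_le_of_le_pow ?_
    exact (Nat.pow_le_pow_right hq.pos hi).trans (Nat.pow_log_le_self _ (pow_pos hp.pos _).ne')
  have vq : ∀ n i, n ∈ Sm (P.erase q) X → i ≤ Nat.log q (p ^ n.factorization p) →
      (n / p ^ (Nat.clog p (q^i)) * q^i).factorization q = i := by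
    intro n i hn hi
    have hd := aux n i hn hi
    have hn0 : n ≠ 0 := by have := (mem_Sm.1 hn).1.1; omega
    have hpos : n / p ^ (Nat.clog p (q^i)) ≠ 0 :=
      (Nat.div_pos (Nat.le_of_dvd (by omega) hd) (pow_pos hp.pos _)).ne'
    rw [Nat.factorization_mul hpos (pow_pos hq.pos _).ne', Nat.factorization_div hd]
    simp [fact_q_zero hn, hq.factorization]
  refine Finset.card_le_card_of_injOn (fun x => x.1 / p ^ (Nat.clog p (q^x.2)) * q^x.2) ?_ ?_
  · rintro ⟨n, i⟩ h
    simp only [Finset.coe_sigma, Set.mem_sigma_iff, Finset.mem_coe, Finset.mem_range] at h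
    obtain ⟨hn, hi⟩ := h
    have hd := aux n i hn (by omega)
    have hm := mem_Sm.1 hn
    have hpos : 0 < n / p ^ (Nat.clog p (q^i)) :=
      (Nat.div_pos (Nat.le_of_dvd (by omega) hd) (pow_pos hp.pos _))
    simp only [Finset.mem_coe, mem_Sm]
    refine ⟨⟨Nat.mul_pos hpos (pow_pos hq.pos _), ?_⟩, ?_⟩
    · refine le_trans ?_ hm.1.2
      calc n / p ^ (Nat.clog p (q^i)) * q^i ≤ n / p ^ (Nat.clog p (q^i)) * p ^ (Nat.clog p (q^i)) :=
            Nat.mul_le_mul_left _ (Nat.le_pow_clog hp.one_lt _)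
        _ = n := Nat.div_mul_cancel hd
    · rw [Nat.primeFactors_mul hpos.ne' (pow_pos hq.pos _).ne']
      refine Finset.union_subset ?_ ?_
      · exact (Nat.primeFactors_mono (Nat.div_dvd_of_dvd hd) (by omega)).trans
          (hm.2.trans (Finset.erase_subset _ _))
      · intro r hr
        have hrp := Nat.prime_of_mem_primeFactors hr
        rwa [(Nat.prime_dvd_prime_iff_eq hrp hq).1 (hrp.dvd_of_dvd_pow (Nat.dvd_of_mem_primeFactors hr))]
  · rintro ⟨n, i⟩ h ⟨n', i'⟩ h' heq
    simp only [Finset.coe_sigma, Set.mem_sigma_iff, Finset.mem_coe, Finset.mem_range] at h h'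
    simp only at heq
    have e1 := vq n i h.1 (by omega)
    have e2 := vq n' i' h'.1 (by omega)
    rw [heq, e2] at e1
    subst e1
    have := Nat.eq_of_mul_eq_mul_right (pow_pos hq.pos _) heq
    have hd := aux n i' h.1 (by omega)
    have hd' := aux n' i' h'.1 (by omega)
    have : n = n' := by rw [← Nat.div_mul_cancel hd, this, Nat.div_mul_cancel hd']
    subst this
    rfl

theorem direct_count (P : Finset ℕ) (X q : ℕ) (hq : q.Prime) (hqP : q ∈ P) :
    ∑ n ∈ Sm (P.erase q) X, (Nat.log q (X / n) + 1) ≤ (Sm P X).card := by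
  have : ∑ n ∈ Sm (P.erase q) X, (Nat.log q (X / n) + 1) =
      ((Sm (P.erase q) X).sigma (fun n => Finset.range (Nat.log q (X / n) + 1))).card := by
    rw [Finset.card_sigma]; simp
  rw [this]
  have vq : ∀ n i, n ∈ Sm (P.erase q) X → (n * q^i).factorization q = i := by
    intro n i hn
    have hn0 : n ≠ 0 := by have := (mem_Sm.1 hn).1.1; omega
    rw [Nat.factorization_mul hn0 (pow_pos hq.pos _).ne']
    simp [fact_q_zero hn, hq.factorization]
  refine Finset.card_le_card_of_injOn (fun x => x.1 * q^x.2) ?_ ?_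
  · rintro ⟨n, i⟩ h
    simp only [Finset.coe_sigma, Set.mem_sigma_iff, Finset.mem_coe, Finset.mem_range] at h
    obtain ⟨hn, hi⟩ := h
    have hm := mem_Sm.1 hn
    have hpos : 0 < n := hm.1.1
    simp only [Finset.mem_coe, mem_Sm]
    refine ⟨⟨Nat.mul_pos hpos (pow_pos hq.pos _), ?_⟩, ?_⟩
    · have h1 : q^i ≤ X / n := (Nat.pow_le_pow_right hq.pos (by omega)).trans
        (Nat.pow_log_le_self q (Nat.div_pos hm.1.2 hpos).ne')
      rw [mul_comm]
      exact (Nat.le_div_iff_mul_le hpos).1 h1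
    · rw [Nat.primeFactors_mul hpos.ne' (pow_pos hq.pos _).ne']
      refine Finset.union_subset (hm.2.trans (Finset.erase_subset _ _)) ?_
      intro r hr
      have hrp := Nat.prime_of_mem_primeFactors hr
      rwa [(Nat.prime_dvd_prime_iff_eq hrp hq).1 (hrp.dvd_of_dvd_pow (Nat.dvd_of_mem_primeFactors hr))]
  · rintro ⟨n, i⟩ h ⟨n', i'⟩ h' heq
    simp only [Finset.coe_sigma, Set.mem_sigma_iff, Finset.mem_coe, Finset.mem_range] at h h'
    simp only at heq
    have e1 := vq n i h.1
    have e2 := vq n' i' h'.1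
    rw [heq, e2] at e1
    subst e1
    have := Nat.eq_of_mul_eq_mul_right (pow_pos hq.pos _) heq
    subst this
    rfl

theorem log_le_of_nat_log (q m : ℕ) (z : ℝ) (hq : q.Prime) (hz : 0 < z) (hzm : z < m + 1) :
    Real.log z ≤ Real.log q * ((Nat.log q m + 1 : ℕ) : ℝ) := by
  have h1 : m < q ^ (Nat.log q m + 1) := Nat.lt_pow_succ_log_self hq.one_lt m
  have h2 : z ≤ (q:ℝ) ^ (Nat.log q m + 1) := by
    have : ((m + 1 : ℕ) : ℝ) ≤ ((q ^ (Nat.log q m + 1) : ℕ) : ℝ) := by exact_mod_cast h1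
    push_cast at this
    linarith
  have := Real.log_le_log hz h2
  rw [Real.log_pow] at this
  linarith

theorem remove_one (P : Finset ℕ) (hP : ∀ p ∈ P, p.Prime) (X q : ℕ) (x : ℝ) (hx : 0 < x)
    (hxX : x < X + 1) (hqP : q ∈ P) :
    ((Sm (P.erase q) X).card : ℝ) * Real.log x ≤ P.card * Real.log q * (Sm P X).card := by
  have hq := hP q hqP
  have hlq : 0 ≤ Real.log q := Real.log_natCast_nonneg q
  have hpt : ∀ n ∈ Sm (P.erase q) X, Real.log x ≤ Real.log q *
      (((∑ p ∈ P.erase q, (Nat.log q (p ^ n.factorization p) + 1)) + (Nat.log q (X / n) + 1) : ℕ) : ℝ) := by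
    intro n hn
    have hm := mem_Sm.1 hn
    have hn0 : (0:ℝ) < n := by exact_mod_cast hm.1.1
    have h1 : Real.log x = Real.log n + Real.log (x / n) := by
      rw [Real.log_div hx.ne' hn0.ne']; ring
    have h2 : Real.log n = ∑ p ∈ P.erase q, Real.log ((p ^ n.factorization p : ℕ) : ℝ) := by
      conv_lhs => rw [← Nat.prod_factorization_pow_eq_self (n := n) (by have := hm.1.1; omega)]
      rw [Finsupp.prod_of_support_subset (s := P.erase q)]
      · rw [Nat.cast_prod, Real.log_prod]
        intro p hp
        have := (hP p (Finset.mem_of_mem_erase hp)).pos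
        positivity
      · rw [Nat.support_factorization]; exact hm.2
      · intro i _; simp
    rw [h1, h2, Nat.cast_add, mul_add, Nat.cast_sum, Finset.mul_sum]
    refine add_le_add (Finset.sum_le_sum ?_) ?_
    · intro p hp
      have := (hP p (Finset.mem_of_mem_erase hp)).pos
      refine log_le_of_nat_log q _ _ hq (by positivity) (by linarith)
    · refine log_le_of_nat_log q _ _ hq (by positivity) ?_
      have : X < (X/n + 1) * n := by
        have := Nat.lt_div_mul_add (a := X) (b := n) hm.1.1
        linarith
      have h3 : ((X + 1 : ℕ):ℝ) ≤ (((X/n + 1) * n : ℕ) : ℝ) := by exact_mod_cast this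
      push_cast at h3
      rw [div_lt_iff₀ hn0]
      linarith
  have hs := Finset.sum_le_sum hpt
  rw [Finset.sum_const, nsmul_eq_mul, ← Finset.mul_sum, ← Nat.cast_sum, Finset.sum_add_distrib,
    Finset.sum_comm] at hs
  have hb : (∑ p ∈ P.erase q, ∑ n ∈ Sm (P.erase q) X, (Nat.log q (p ^ n.factorization p) + 1)) +
      ∑ n ∈ Sm (P.erase q) X, (Nat.log q (X / n) + 1) ≤ P.card * (Sm P X).card := by
    have h1 : (∑ p ∈ P.erase q, ∑ n ∈ Sm (P.erase q) X, (Nat.log q (p ^ n.factorization p) + 1))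
        ≤ ∑ p ∈ P.erase q, (Sm P X).card := by
      refine Finset.sum_le_sum ?_
      intro p hp
      exact swap_count P X q p hq hqP (hP p (Finset.mem_of_mem_erase hp))
    rw [Finset.sum_const, smul_eq_mul] at h1
    have h2 := direct_count P X q hq hqP
    have h3 : P.card = (P.erase q).card + 1 := (Finset.card_erase_add_one hqP).symm
    rw [h3, add_mul, one_mul]
    exact add_le_add h1 h2
  refine hs.trans ?_
  have hb' : (((∑ p ∈ P.erase q, ∑ n ∈ Sm (P.erase q) X, (Nat.log q (p ^ n.factorization p) + 1)) +
      ∑ n ∈ Sm (P.erase q) X, (Nat.log q (X / n) + 1) : ℕ) : ℝ) ≤ P.card * (Sm P X).card := by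
    exact_mod_cast hb
  calc _ ≤ Real.log q * (P.card * (Sm P X).card) := mul_le_mul_of_nonneg_left hb' hlq
    _ = _ := by ring

theorem remove_many (P : Finset ℕ) (hP : ∀ p ∈ P, p.Prime) (X : ℕ) (x : ℝ) (hx : 1 < x)
    (hxX : x < X + 1) (Q : Finset ℕ) (hQ : Q ⊆ P) :
    ((Sm (P \ Q) X).card : ℝ) ≤ (∏ q ∈ Q, (P.card * Real.log q / Real.log x)) * (Sm P X).card := by
  have hl : 0 < Real.log x := Real.log_pos hx
  induction Q using Finset.induction_on with
  | empty => simp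
  | insert q Q hqQ ih =>
    have hqP : q ∈ P := hQ (Finset.mem_insert_self _ _)
    have ih' := ih ((Finset.subset_insert _ _).trans hQ)
    have h1 := remove_one (P \ Q) (fun p hp => hP p (Finset.mem_sdiff.1 hp).1) X q x (by linarith) hxX
      (Finset.mem_sdiff.2 ⟨hqP, hqQ⟩)
    rw [Finset.prod_insert hqQ, Finset.sdiff_insert]
    have h2 : ((P \ Q).card : ℝ) ≤ P.card := by exact_mod_cast Finset.card_le_card Finset.sdiff_subset
    have hlq : 0 ≤ Real.log q := Real.log_natCast_nonneg q
    rw [← le_div_iff₀ hl] at h1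
    calc _ ≤ _ := h1
      _ ≤ (P.card * Real.log q * ((∏ q ∈ Q, (P.card * Real.log q / Real.log x)) * (Sm P X).card)) / Real.log x := by
          gcongr
      _ = _ := by ring

open Classical in
theorem part_count (P Q : Finset ℕ) (X Y : ℕ) :
    ((Sm P X).filter (fun n => ∀ d e, n = d * e → d.primeFactors ⊆ Q → d < Y)).card ≤
      (Sm Q (Y-1)).card * (Sm (P \ Q) X).card := by
  rw [← Finset.card_product]
  refine (Finset.card_le_card ?_).trans (Finset.card_image_le (f := fun z : ℕ × ℕ => z.1 * z.2))
  intro n hn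
  obtain ⟨hn, hd⟩ := Finset.mem_filter.1 hn
  obtain ⟨⟨hn1, hnX⟩, hnP⟩ := mem_Sm.1 hn
  set d := (n.primeFactorsList.filter (· ∈ Q)).prod with hdd
  set e := (n.primeFactorsList.filter (fun a => ¬ (a ∈ Q))).prod with hee
  have hde : n = d * e := by
    conv_lhs => rw [← Nat.prod_primeFactorsList (n := n) (by omega)]
    have := List.prod_map_filter_mul_prod_map_filter_not (· ∈ Q) id n.primeFactorsList
    simp only [List.map_id] at this
    rw [← this, hdd, hee]
  have hd0 : 0 < d := Nat.pos_of_ne_zero (by rintro h; rw [h] at hde; omega)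
  have he0 : 0 < e := Nat.pos_of_ne_zero (by rintro h; rw [h] at hde; omega)
  have hpf : ∀ l : List ℕ, (∀ p ∈ l, p.Prime) → ∀ r ∈ l.prod.primeFactors, r ∈ l := by
    intro l hl r hr
    have hrp := Nat.prime_of_mem_primeFactors hr
    obtain ⟨a, ha, hra⟩ := (Prime.dvd_prod_iff hrp.prime).1 (Nat.dvd_of_mem_primeFactors hr)
    rwa [(Nat.prime_dvd_prime_iff_eq hrp (hl a ha)).1 hra]
  have hdQ : d.primeFactors ⊆ Q := by
    intro r hr
    have := hpf _ (fun p hp => Nat.prime_of_mem_primeFactorsList (List.mem_of_mem_filter hp)) r hr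
    simpa using (List.mem_filter.1 this).2
  have heQ : e.primeFactors ⊆ P \ Q := by
    intro r hr
    have := hpf _ (fun p hp => Nat.prime_of_mem_primeFactorsList (List.mem_of_mem_filter hp)) r hr
    have := List.mem_filter.1 this
    refine Finset.mem_sdiff.2 ⟨hnP (Nat.mem_primeFactors_iff_mem_primeFactorsList.2 this.1), by simpa using this.2⟩
  refine Finset.mem_image.2 ⟨(d, e), Finset.mem_product.2 ⟨mem_Sm.2 ⟨⟨hd0, ?_⟩, hdQ⟩, mem_Sm.2 ⟨⟨he0, ?_⟩, heQ⟩⟩, hde.symm⟩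
  · have := hd d e hde hdQ
    show d ≤ Y - 1
    omega
  · show e ≤ X
    refine le_trans ?_ hnX
    rw [hde]; exact Nat.le_mul_of_pos_left e hd0

theorem rankin (Q : Finset ℕ) (hQ : ∀ q ∈ Q, q.Prime) (Y : ℕ) (W β : ℝ) (hβ : 0 < β)
    (hY : ∀ s : ℕ, 0 < s → s ≤ Y → Real.log s ≤ W) (hsm : ∀ q ∈ Q, β * Real.log q ≤ 1) :
    ((Sm Q Y).card : ℝ) ≤ Real.exp (β * W) * ∏ q ∈ Q, (2 / (β * Real.log q)) := by
  let f : ℕ →* ℝ :=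
    { toFun := fun n => (n : ℝ) ^ (-β)
      map_one' := by simp
      map_mul' := by
        intro a b
        push_cast
        exact Real.mul_rpow (by positivity) (by positivity) }
  have hf : ∀ n, f n = (n : ℝ) ^ (-β) := fun n => rfl
  have hf0 : ∀ n, 0 ≤ f n := fun n => by rw [hf]; positivity
  have hsum := EulerProduct.summable_and_hasSum_factoredNumbers_prod_filter_prime_geometric (f := f)
    (by
      intro p hp
      rw [Real.norm_of_nonneg (hf0 p), hf]
      exact Real.rpow_lt_one_of_one_lt_of_neg (by exact_mod_cast hp.one_lt) (by linarith)) Q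
  have h1 : ∑ s ∈ Sm Q Y, f s ≤ ∏ p ∈ Q with p.Prime, (1 - f p)⁻¹ := by
    let T : Finset (Nat.factoredNumbers Q) := (Sm Q Y).attach.image (fun s => ⟨s.1, by
      have := mem_Sm.1 s.2
      exact Nat.mem_factoredNumbers_of_primeFactors_subset (by omega) this.2⟩)
    have hT : ∑ s ∈ Sm Q Y, f s = ∑ s ∈ T, f s := by
      rw [Finset.sum_image]
      · exact (Finset.sum_attach _ _).symm
      · intro a _ b _ hab
        exact Subtype.ext (congrArg (fun z : Nat.factoredNumbers Q => z.1) hab)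
    rw [hT]
    exact sum_le_hasSum T (fun i _ => hf0 _) hsum.2
  have h2 : ((Sm Q Y).card : ℝ) * Real.exp (-(β * W)) ≤ ∑ s ∈ Sm Q Y, f s := by
    rw [← nsmul_eq_mul, ← Finset.sum_const]
    refine Finset.sum_le_sum ?_
    intro s hs
    have hs' := mem_Sm.1 hs
    have hs0 : (0:ℝ) < s := by exact_mod_cast hs'.1.1
    rw [hf, Real.rpow_def_of_pos hs0]
    apply Real.exp_le_exp.2
    have := hY s hs'.1.1 hs'.1.2
    nlinarith
  have h3 : ∏ p ∈ Q with p.Prime, (1 - f p)⁻¹ ≤ ∏ q ∈ Q, (2 / (β * Real.log q)) := by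
    rw [Finset.filter_true_of_mem hQ]
    refine Finset.prod_le_prod ?_ ?_
    · intro p hp
      have : f p ≤ 1 := by
        rw [hf]
        exact Real.rpow_le_one_of_one_le_of_nonpos (by exact_mod_cast (hQ p hp).one_lt.le) (by linarith)
      exact inv_nonneg.2 (by linarith)
    · intro p hp
      have hp0 : (0:ℝ) < p := by exact_mod_cast (hQ p hp).pos
      have hlp : 0 < Real.log p := Real.log_pos (by exact_mod_cast (hQ p hp).one_lt)
      set v := β * Real.log p with hv
      have hv0 : 0 < v := by positivity
      have hv1 : v ≤ 1 := hsm p hp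
      have hfp : f p = Real.exp (-v) := by
        rw [hf, Real.rpow_def_of_pos hp0, hv]; congr 1; ring
      rw [hfp, show (2 / v) = (v/2)⁻¹ by rw [inv_div]]
      apply inv_anti₀ (by positivity)
      have h4 : 1 + v ≤ Real.exp v := by linarith [Real.add_one_le_exp v]
      have h5 : Real.exp (-v) ≤ 1 / (1 + v) := by
        rw [Real.exp_neg, ← one_div]
        exact one_div_le_one_div_of_le (by linarith) h4
      have h6 : 1 / (1+v) ≤ 1 - v/2 := by
        rw [div_le_iff₀ (by linarith)]
        nlinarith
      linarith
  have h7 := h2.trans (h1.trans h3)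
  calc ((Sm Q Y).card : ℝ) = Real.exp (β * W) * ((Sm Q Y).card * Real.exp (-(β * W))) := by
        rw [Real.exp_neg]; field_simp
    _ ≤ _ := mul_le_mul_of_nonneg_left h7 (Real.exp_pos _).le

theorem Pmax_le_iff {n : ℕ} (hn : 1 ≤ n) {y : ℝ} (hy : 2 ≤ y) :
    (Pmax n : ℝ) ≤ y ↔ n.primeFactors ⊆ Nat.primesLE ⌊y⌋₊ := by
  unfold Pmax
  have hfl : 2 ≤ ⌊y⌋₊ := Nat.le_floor (by exact_mod_cast hy)
  split_ifs with h
  · have : n = 1 := by omega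
    subst this
    simp
    linarith
  · rw [← Nat.le_floor_iff (by linarith), Finset.sup_le_iff]
    constructor
    · intro h p hp
      exact Nat.mem_primesLE.2 ⟨h p hp, Nat.prime_of_mem_primeFactors hp⟩
    · intro h p hp
      exact (Nat.mem_primesLE.1 (h hp)).1

theorem Psi_set (x y : ℝ) (hy : 2 ≤ y) (hx : 0 ≤ x) :
    {n : ℕ | 1 ≤ n ∧ (n : ℝ) ≤ x ∧ (Pmax n : ℝ) ≤ y} = ((Sm (Nat.primesLE ⌊y⌋₊) ⌊x⌋₊ : Finset ℕ) : Set ℕ) := by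
  ext n
  simp only [Set.mem_ofPred_eq, Finset.mem_coe, mem_Sm]
  constructor
  · rintro ⟨h1, h2, h3⟩
    exact ⟨⟨h1, Nat.le_floor h2⟩, (Pmax_le_iff h1 hy).1 h3⟩
  · rintro ⟨⟨h1, h2⟩, h3⟩
    exact ⟨h1, (Nat.le_floor_iff hx).1 h2, (Pmax_le_iff h1 hy).2 h3⟩

theorem Psi_eq (x y : ℝ) (hy : 2 ≤ y) (hx : 0 ≤ x) : Psi x y = (Sm (Nat.primesLE ⌊y⌋₊) ⌊x⌋₊).card := by
  unfold Psi
  rw [Psi_set x y hy hx, Set.ncard_coe_finset]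

theorem len_le (x y : ℝ) (hy : 2 ≤ y) (hx : 0 ≤ x) (l : List ℕ) (hl : IsDivChain l)
    (h : ∀ n ∈ l, (n : ℝ) ≤ x ∧ (Pmax n : ℝ) ≤ y) : l.length ≤ Psi x y := by
  rw [Psi_eq x y hy hx, ← List.toFinset_card_of_nodup hl.1]
  apply Finset.card_le_card
  intro n hn
  have hn := List.mem_toFinset.1 hn
  have : n ∈ {n : ℕ | 1 ≤ n ∧ (n : ℝ) ≤ x ∧ (Pmax n : ℝ) ≤ y} := ⟨hl.2.1 n hn, h n hn⟩
  rw [Psi_set x y hy hx] at this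
  exact this

theorem fxy_le (x y : ℝ) (hy : 2 ≤ y) (hx : 0 ≤ x) : fxy x y ≤ Psi x y := by
  unfold fxy
  apply csSup_le'
  rintro L ⟨l, hl, h, rfl⟩
  exact len_le x y hy hx l hl h

theorem le_fxy (x y : ℝ) (hy : 2 ≤ y) (hx : 0 ≤ x) (l : List ℕ) (hl : IsDivChain l)
    (h : ∀ n ∈ l, (n : ℝ) ≤ x ∧ (Pmax n : ℝ) ≤ y) : l.length ≤ fxy x y := by
  unfold fxy
  refine le_csSup ⟨Psi x y, ?_⟩ ⟨l, hl, h, rfl⟩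
  rintro L ⟨l, hl, h, rfl⟩
  exact len_le x y hy hx l hl h

theorem nth_le_iff (i m : ℕ) : Nat.nth Nat.Prime i ≤ m ↔ i < Nat.primeCounting m := by
  rw [Nat.primeCounting, Nat.primeCounting']
  constructor
  · intro h
    have := Nat.count_monotone Nat.Prime (Nat.succ_le_succ h)
    rw [Nat.succ_eq_add_one, Nat.count_succ, Nat.count_nth_of_infinite Nat.infinite_setOfPred_prime,
      if_pos (Nat.prime_nth_prime i)] at this
    exact this
  · intro h
    have := Nat.nth_lt_of_lt_count h
    omega

/-- first 50 primes -/
noncomputable def Q50 : Finset ℕ := (Finset.range 50).image (Nat.nth Nat.Prime)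

/-- constant -/
noncomputable def B50 : ℕ := (Nat.nth Nat.Prime 50) ^ 2

open Classical in
theorem good_le (x y : ℝ) (hy : 2 ≤ y) (hyx : y ≤ x) :
    Psi x y ≤ fxy x y +
      ((Sm (Nat.primesLE ⌊y⌋₊) ⌊x⌋₊).filter
        (fun n => ∀ d e, n = d * e → d.primeFactors ⊆ {2} → d < B50)).card +
      ((Sm (Nat.primesLE ⌊y⌋₊) ⌊x⌋₊).filter
        (fun n => ∀ d e, n = d * e → d.primeFactors ⊆ Q50 → d < ⌊y⌋₊ ^ 2)).card := by
  have hx : 0 ≤ x := by linarith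
  set P := Nat.primesLE ⌊y⌋₊ with hP
  set X := ⌊x⌋₊ with hX
  set F1 := (Sm P X).filter (fun n => ∀ d e, n = d * e → d.primeFactors ⊆ {2} → d < B50) with hF1
  set F2 := (Sm P X).filter (fun n => ∀ d e, n = d * e → d.primeFactors ⊆ Q50 → d < ⌊y⌋₊ ^ 2) with hF2
  have hfl : 2 ≤ ⌊y⌋₊ := Nat.le_floor (by exact_mod_cast hy)
  set k := Nat.primeCounting ⌊y⌋₊ with hk
  have hk1 : 0 < k := (nth_le_iff 0 _).1 (by rw [Nat.nth_prime_zero_eq_two]; exact hfl)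
  have htop : Nat.nth Nat.Prime (k-1) ≤ ⌊y⌋₊ := (nth_le_iff _ _).2 (by omega)
  have hmono := Nat.nth_monotone Nat.infinite_setOfPred_prime
  obtain ⟨l, hl, _, _, hle, hcov⟩ := path_exists (k-1) X (htop.trans (Nat.floor_le_floor hyx))
  have hlen := le_fxy x y hy hx l hl (by
    intro n hn
    obtain ⟨h1, h2⟩ := hle n hn
    refine ⟨(Nat.le_floor_iff hx).1 h1, (Pmax_le_iff (hl.2.1 n hn) hy).2 ?_⟩
    intro p hp
    have hpp := Nat.prime_of_mem_primeFactors hp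
    exact Nat.mem_primesLE.2 ⟨(h2 p hpp (Nat.dvd_of_mem_primeFactors hp)).trans htop, hpp⟩)
  rw [Psi_eq x y hy hx]
  change (Sm P X).card ≤ _
  have hsub : Sm P X ⊆ l.toFinset ∪ F1 ∪ F2 := by
    intro n hn
    by_contra hcon
    simp only [Finset.mem_union, not_or, List.mem_toFinset] at hcon
    obtain ⟨⟨hnl, hn1⟩, hn2⟩ := hcon
    rw [hF1, Finset.mem_filter] at hn1
    rw [hF2, Finset.mem_filter] at hn2
    push Not at hn1 hn2
    obtain ⟨d1, e1, hde1, hd1, hb1⟩ := hn1 hn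
    obtain ⟨d2, e2, hde2, hd2, hb2⟩ := hn2 hn
    obtain ⟨⟨hn0, hnX⟩, hnP⟩ := mem_Sm.1 hn
    apply hnl
    apply hcov n hn0 hnX
    · intro q hq hqn
      have hqP := Nat.mem_primesLE.1 (hnP (Nat.mem_primeFactors.2 ⟨hq, hqn, by omega⟩))
      rw [← Nat.nth_count hq] at hqP ⊢
      have := (nth_le_iff _ _).1 hqP.1
      exact hmono (by omega)
    · intro i hi
      by_cases hi50 : i < 50
      · refine ⟨d1, e1, hde1, ?_, ?_⟩
        · intro q hq hqd
          have : q ∈ d1.primeFactors := Nat.mem_primeFactors.2 ⟨hq, hqd, by rintro rfl; omega⟩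
          have := hd1 this
          rw [Finset.mem_singleton] at this
          rw [this]
          exact (Nat.prime_nth_prime i).two_le
        · have h1 : Nat.nth Nat.Prime (i+1) ≤ Nat.nth Nat.Prime 50 := hmono (by omega)
          have h2 : Nat.nth Nat.Prime i ≤ Nat.nth Nat.Prime 50 := hmono (by omega)
          have h3 : Nat.nth Nat.Prime (i+1) * Nat.nth Nat.Prime i ≤ d1 := by
            refine le_trans ?_ hb1
            rw [B50, sq]
            exact Nat.mul_le_mul h1 h2
          refine le_trans ?_ hnX
          rw [hde1, mul_assoc, mul_comm]
          exact Nat.mul_le_mul_right _ h3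
      · refine ⟨d2, e2, hde2, ?_, ?_⟩
        · intro q hq hqd
          have : q ∈ d2.primeFactors := Nat.mem_primeFactors.2 ⟨hq, hqd, by rintro rfl; omega⟩
          have := hd2 this
          rw [Q50, Finset.mem_image] at this
          obtain ⟨a, ha, rfl⟩ := this
          have := Finset.mem_range.1 ha
          exact hmono (by omega)
        · have h1 : Nat.nth Nat.Prime (i+1) ≤ ⌊y⌋₊ := (hmono (by omega)).trans htop
          have h2 : Nat.nth Nat.Prime i ≤ ⌊y⌋₊ := (hmono (by omega)).trans htop
          have h3 : Nat.nth Nat.Prime (i+1) * Nat.nth Nat.Prime i ≤ d2 := by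
            refine le_trans ?_ hb2
            rw [sq]
            exact Nat.mul_le_mul h1 h2
          refine le_trans ?_ hnX
          rw [hde2, mul_assoc, mul_comm]
          exact Nat.mul_le_mul_right _ h3
  have h1 := Finset.card_le_card hsub
  have h2 := Finset.card_union_le (l.toFinset ∪ F1) F2
  have h3 := Finset.card_union_le (l.toFinset) F1
  have h4 := List.toFinset_card_le l
  omega

theorem Sm_card_le (Q : Finset ℕ) (Y : ℕ) : (Sm Q Y).card ≤ Y := by
  refine (Finset.card_filter_le _ _).trans ?_
  simp

theorem main_large (x y : ℝ) (hy2 : 2 ≤ y) (hyx : y ≤ Real.log x)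
    (hpi : (Nat.primeCounting ⌊y⌋₊ : ℝ) ≤ 2 * y / Real.log y)
    (hbig : (Nat.nth Nat.Prime 50 : ℝ) ≤ y)
    (hbig2 : 25 * Real.log (Nat.nth Nat.Prime 50) ≤ Real.log y) (hx1 : 1 < x) :
    (Psi x y : ℝ) * (1 - (y / Real.log x) / 4 - 2 * B50 * (y / (Real.log x * Real.log y))) ≤ fxy x y := by
  classical
  have hly : 0 < Real.log y := Real.log_pos (by linarith)
  have hlx : 0 < Real.log x := Real.log_pos hx1
  have hyx' : y ≤ x := by
    have := Real.log_le_sub_one_of_pos (show 0 < x by linarith)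
    linarith
  have hgood := good_le x y hy2 hyx'
  set P := Nat.primesLE ⌊y⌋₊ with hP
  set X := ⌊x⌋₊ with hX
  have hPp : ∀ p ∈ P, p.Prime := fun p hp => (Nat.mem_primesLE.1 hp).2
  have hk : P.card = Nat.primeCounting ⌊y⌋₊ := Nat.primesLE_card_eq_primeCounting _
  have hN : Psi x y = (Sm P X).card := Psi_eq x y hy2 (by linarith)
  have hxX : x < X + 1 := Nat.lt_floor_add_one x
  set u := y / Real.log x with hu
  have hu0 : 0 < u := by positivity
  have hu1 : u ≤ 1 := by rw [hu, div_le_one hlx]; exact hyx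
  have hklog : (P.card : ℝ) * Real.log y / Real.log x ≤ 2 * u := by
    have hpi' := hpi
    rw [le_div_iff₀ hly] at hpi'
    rw [hk, hu, ← mul_div_assoc]
    exact div_le_div_of_nonneg_right hpi' hlx.le
  have hN0 : (0:ℝ) ≤ (Sm P X).card := by positivity
  have hnthP : ∀ i ≤ 50, Nat.nth Nat.Prime i ∈ P := by
    intro i hi
    refine Nat.mem_primesLE.2 ⟨?_, Nat.prime_nth_prime i⟩
    exact (Nat.nth_monotone Nat.infinite_setOfPred_prime hi).trans (Nat.le_floor hbig)
  have hQP : Q50 ⊆ P := by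
    intro q hq
    rw [Q50, Finset.mem_image] at hq
    obtain ⟨a, ha, rfl⟩ := hq
    exact hnthP a (by have := Finset.mem_range.1 ha; omega)
  have hQ50 : Q50.card = 50 := by
    rw [Q50, Finset.card_image_of_injective _ (Nat.nth_injective Nat.infinite_setOfPred_prime)]
    simp
  -- bad 1
  have hb1 : (((Sm P X).filter (fun n => ∀ d e, n = d * e → d.primeFactors ⊆ {2} → d < B50)).card : ℝ)
      ≤ 2 * B50 * (y / (Real.log x * Real.log y)) * (Sm P X).card := by
    have h1 : (((Sm P X).filter (fun n => ∀ d e, n = d * e → d.primeFactors ⊆ {2} → d < B50)).card : ℝ)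
        ≤ (Sm {2} (B50-1)).card * (Sm (P \ {2}) X).card := by
      exact_mod_cast part_count P {2} X B50
    have h2 := remove_many P hPp X x hx1 hxX {2} (by
      rw [Finset.singleton_subset_iff, ← Nat.nth_prime_zero_eq_two]
      exact hnthP 0 (by norm_num))
    rw [Finset.prod_singleton] at h2
    have h3 : ((Sm {2} (B50-1)).card : ℝ) ≤ B50 := by
      exact_mod_cast (Sm_card_le _ _).trans (Nat.sub_le _ _)
    have h4 : (P.card : ℝ) * Real.log (2:ℕ) / Real.log x ≤ 2 * (y / (Real.log x * Real.log y)) := by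
      have hl2 : Real.log (2:ℕ) ≤ 1 := by
        have := Real.log_two_lt_d9
        push_cast
        linarith
      calc (P.card : ℝ) * Real.log (2:ℕ) / Real.log x ≤ (2 * y / Real.log y) * 1 / Real.log x := by
            rw [hk]
            gcongr
        _ = _ := by field_simp
    calc _ ≤ _ := h1
      _ ≤ B50 * ((2 * (y / (Real.log x * Real.log y))) * (Sm P X).card) := by
          refine mul_le_mul h3 (h2.trans (mul_le_mul_of_nonneg_right h4 hN0)) (by positivity) (by positivity)
      _ = _ := by ring
  have hb2 : (((Sm P X).filter (fun n => ∀ d e, n = d * e → d.primeFactors ⊆ Q50 → d < ⌊y⌋₊^2)).card : ℝ)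
      ≤ u / 4 * (Sm P X).card := by
    have h1 : (((Sm P X).filter (fun n => ∀ d e, n = d * e → d.primeFactors ⊆ Q50 → d < ⌊y⌋₊^2)).card : ℝ)
        ≤ (Sm Q50 (⌊y⌋₊^2-1)).card * (Sm (P \ Q50) X).card := by
      exact_mod_cast part_count P Q50 X (⌊y⌋₊^2)
    have h2 := remove_many P hPp X x hx1 hxX Q50 hQP
    have h3 := rankin Q50 (fun q hq => hPp q (hQP hq)) (⌊y⌋₊^2-1) (2 * Real.log y) (25 / Real.log y)
      (by positivity) (by
        intro s hs hsY
        have hs2 : (s:ℝ) ≤ y^2 := by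
          have h5 : s ≤ ⌊y⌋₊^2 := hsY.trans (Nat.sub_le _ _)
          have h6 : (s:ℝ) ≤ (⌊y⌋₊:ℝ)^2 := by exact_mod_cast h5
          have h7 : (⌊y⌋₊:ℝ) ≤ y := Nat.floor_le (by linarith)
          exact h6.trans (by gcongr)
        have := Real.log_le_log (by exact_mod_cast hs) hs2
        rw [Real.log_pow] at this
        exact_mod_cast this) (by
        intro q hq
        rw [Q50, Finset.mem_image] at hq
        obtain ⟨a, ha, rfl⟩ := hq
        have ha := Finset.mem_range.1 ha
        have h5 : Real.log (Nat.nth Nat.Prime a) ≤ Real.log (Nat.nth Nat.Prime 50) := by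
          apply Real.log_le_log
          · exact_mod_cast (Nat.prime_nth_prime a).pos
          · exact_mod_cast Nat.nth_monotone Nat.infinite_setOfPred_prime (by omega : a ≤ 50)
        rw [div_mul_eq_mul_div, div_le_one hly]
        linarith)
    have h4 : Real.exp (25 / Real.log y * (2 * Real.log y)) = (Real.exp 1)^50 := by
      rw [← Real.exp_nat_mul]
      congr 1
      field_simp
      norm_num
    rw [h4] at h3
    have hprod : (Real.exp 1)^50 * (∏ q ∈ Q50, (2 / (25 / Real.log y * Real.log q))) *
        (∏ q ∈ Q50, (P.card * Real.log q / Real.log x)) =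
        (Real.exp 1 * (2 / 25 * (P.card * Real.log y / Real.log x)))^50 := by
      rw [mul_assoc, ← Finset.prod_mul_distrib, mul_pow]
      congr 1
      rw [← hQ50, ← Finset.prod_const]
      refine Finset.prod_congr rfl ?_
      intro q hq
      have hlq : 0 < Real.log q := Real.log_pos (by exact_mod_cast (hPp q (hQP hq)).one_lt)
      field_simp
    have hle : Real.exp 1 * (2 / 25 * (P.card * Real.log y / Real.log x)) ≤ u / 2 := by
      have he : Real.exp 1 ≤ 3 := by have := Real.exp_one_lt_d9; linarith
      calc _ ≤ 3 * (2 / 25 * (2 * u)) := by gcongr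
        _ ≤ _ := by linarith
    have hpow : (Real.exp 1 * (2 / 25 * (P.card * Real.log y / Real.log x)))^50 ≤ u / 4 := by
      calc _ ≤ (u/2)^50 := by gcongr
        _ ≤ (u/2)^2 := pow_le_pow_of_le_one (by positivity) (by linarith) (by norm_num)
        _ ≤ u / 4 := by nlinarith
    calc _ ≤ _ := h1
      _ ≤ ((Real.exp 1)^50 * (∏ q ∈ Q50, (2 / (25 / Real.log y * Real.log q)))) *
        ((∏ q ∈ Q50, (P.card * Real.log q / Real.log x)) * (Sm P X).card) :=
          mul_le_mul h3 h2 (by positivity) (le_trans (by positivity) h3)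
      _ = (Real.exp 1 * (2 / 25 * (P.card * Real.log y / Real.log x)))^50 * (Sm P X).card := by
          rw [← mul_assoc, hprod]
      _ ≤ _ := mul_le_mul_of_nonneg_right hpow hN0
  have hg : (Psi x y : ℝ) ≤ fxy x y +
      ((Sm P X).filter (fun n => ∀ d e, n = d * e → d.primeFactors ⊆ {2} → d < B50)).card +
      ((Sm P X).filter (fun n => ∀ d e, n = d * e → d.primeFactors ⊆ Q50 → d < ⌊y⌋₊ ^ 2)).card := by
    exact_mod_cast hgood
  rw [hN] at hg ⊢
  linarith

theorem stmt_1 : ∃ C : ℝ, 0 < C ∧ ∀ x y : ℝ, 2 ≤ y → y ≤ Real.log x →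
    (fxy x y : ℝ) ≤ (Psi x y : ℝ) ∧
    ((Psi x y : ℝ) / (1 + y / Real.log x)) *
        (1 - C * (Real.log y / y + y / (Real.log x * Real.log y))) ≤ (fxy x y : ℝ) := by
  have hev : ∀ᶠ y : ℝ in Filter.atTop, (Nat.primeCounting ⌊y⌋₊ : ℝ) ≤ 2 * y / Real.log y ∧
      (Nat.nth Nat.Prime 50 : ℝ) ≤ y ∧ 25 * Real.log (Nat.nth Nat.Prime 50) ≤ Real.log y := by
    have hl4 : Real.log 4 < 2 := by
      rw [show (4:ℝ) = 2^2 by norm_num, Real.log_pow]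
      have := Real.log_two_lt_d9
      push_cast
      linarith
    have h1 := Chebyshev.eventually_primeCounting_le (ε := 2 - Real.log 4) (by linarith)
    filter_upwards [h1, Filter.eventually_ge_atTop (Nat.nth Nat.Prime 50 : ℝ),
      Real.tendsto_log_atTop.eventually_ge_atTop (25 * Real.log (Nat.nth Nat.Prime 50))] with y h1 h2 h3
    refine ⟨?_, h2, h3⟩
    rwa [add_sub_cancel] at h1
  obtain ⟨y0, hy0⟩ := Filter.eventually_atTop.1 hev
  have hl2 : 0 < Real.log 2 := Real.log_pos (by norm_num)
  refine ⟨4 * B50 + |y0| / Real.log 2 + 1, by positivity, ?_⟩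
  intro x y hy hyx
  have hlx : 0 < Real.log x := by linarith
  have hx1 : 1 < x ∨ x ≤ 1 := lt_or_ge 1 x
  set u := y / Real.log x with hu
  rcases hx1 with hx1 | hx1
  · refine ⟨by exact_mod_cast fxy_le x y hy (by linarith), ?_⟩
    have hly2 : Real.log 2 ≤ Real.log y := Real.log_le_log (by norm_num) hy
    have hly : 0 < Real.log y := by linarith
    have hu0 : 0 < u := by positivity
    have hu1 : u ≤ 1 := by rw [hu, div_le_one hlx]; exact hyx
    set w := y / (Real.log x * Real.log y) with hw
    have hw0 : 0 ≤ w := by positivity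
    have hv0 : 0 < Real.log y / y := by positivity
    set v := Real.log y / y with hv
    have hPsi : (0:ℝ) ≤ Psi x y := by positivity
    have hB : (0:ℝ) ≤ B50 := by positivity
    have hA : 0 ≤ |y0| / Real.log 2 := by positivity
    set A := |y0| / Real.log 2 with hAdef
    rcases lt_or_ge y y0 with h | h
    · have h1 : 1 ≤ A * v := by
        have h2 : y ≤ |y0| := h.le.trans (le_abs_self _)
        rw [hAdef, hv, div_mul_div_comm, one_le_div (by positivity), mul_comm (Real.log 2)]
        exact mul_le_mul h2 hly2 hl2.le (by positivity)
      have h2 : 1 - (4 * B50 + A + 1) * (v + w) ≤ 0 := by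
        have e1 : (0:ℝ) ≤ (4 * B50 + 1) * (v + w) := by positivity
        have e2 : (0:ℝ) ≤ A * w := by positivity
        linarith
      have h3 : (0:ℝ) ≤ fxy x y := by positivity
      exact (mul_nonpos_of_nonneg_of_nonpos (by positivity) h2).trans h3
    · have hm := main_large x y hy hyx (hy0 y h).1 (hy0 y h).2.1 (hy0 y h).2.2 hx1
      refine le_trans ?_ hm
      rw [← hu, ← hw, div_mul_eq_mul_div, mul_div_assoc]
      refine mul_le_mul_of_nonneg_left ?_ hPsi
      rw [div_le_iff₀ (by positivity)]
      have e1 : (0:ℝ) ≤ (4 * B50 + A + 1) * v := by positivity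
      have e2 : (0:ℝ) ≤ (A + 1) * w := by positivity
      have e3 : (0:ℝ) ≤ B50 * w * (1 - u) := by
        have : 0 ≤ 1 - u := by linarith
        positivity
      have e4 : 0 ≤ u * (1 - u) := mul_nonneg hu0.le (by linarith)
      nlinarith
  · have hxneg : x < 0 := by
      by_contra hc
      have := Real.log_nonpos (not_lt.1 hc) hx1
      linarith
    have hno : ∀ n : ℕ, ¬ (n : ℝ) ≤ x := by
      intro n hn
      have : (0:ℝ) ≤ n := by positivity
      linarith
    have hP : Psi x y = 0 := by
      unfold Psi
      rw [show {n : ℕ | 1 ≤ n ∧ (n : ℝ) ≤ x ∧ (Pmax n : ℝ) ≤ y} = ∅ from ?_, Set.ncard_empty]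
      ext n
      simp [hno n]
    have hf : fxy x y = 0 := by
      unfold fxy
      apply Nat.le_zero.1
      apply csSup_le'
      rintro L ⟨l, hl, h, rfl⟩
      cases l with
      | nil => simp
      | cons a t => exact absurd (h a (by simp)).1 (hno a)
    rw [hP, hf]
    simp
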